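/- For every integer k > 1 with smallest prime divisor p, and for every α with 0 < α < c/(p−1) for a suitable absolute constant c > 0, there exist arbitrarily large α-expanding graphs in which every cycle has length divisible by p; in particular, these graphs contain no cycle of length congruent to 1 modulo k. -/

import Mathlib

open Finset

variable {V : Type*}

/-- The external neighborhood of a vertex set `X` in a graph `G`:
vertices outside `X` with a neighbor in `X`. -/
noncomputable def extNbhd [Fintype V] (G : SimpleGraph V) (X : Finset V) : Finset V :=
  @Finset.filter V (fun v => v ∉ X ∧ ∃ u ∈ X, G.Adj u v) (Classical.decPred _) Finset.univ

/-- An `n`-vertex graph is an `α`-expander if every vertex set of size at most `n/2`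
has external neighborhood of size at least `α` times its size. -/
def IsExpander [Fintype V] (G : SimpleGraph V) (α : ℝ) : Prop :=
  ∀ X : Finset V, (X.card : ℝ) ≤ (Fintype.card V : ℝ) / 2 →
    α * (X.card : ℝ) ≤ ((extNbhd G X).card : ℝ)

/-- Permutations mapping `A` onto `Y`. -/
lemma fiber_card_le (n : ℕ) (A Y : Finset (Fin n)) :
    (Finset.univ.filter fun σ : Equiv.Perm (Fin n) => ∀ v, v ∈ A ↔ σ v ∈ Y).card
      ≤ (A.card).factorial * (n - A.card).factorial := by
  classical
  by_cases hne : ∃ σ₀ : Equiv.Perm (Fin n), ∀ v, v ∈ A ↔ σ₀ v ∈ Y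
  · obtain ⟨σ₀, h₀⟩ := hne
    have h1 : Fintype.card ({x // x ∈ A} ≃ {y // y ∈ Y}) = (A.card).factorial := by
      rw [Fintype.card_equiv (σ₀.subtypeEquiv h₀)]; simp
    have h2 : Fintype.card ({x // ¬ x ∈ A} ≃ {y // ¬ y ∈ Y}) = (n - A.card).factorial := by
      rw [Fintype.card_equiv (σ₀.subtypeEquiv (fun v => not_congr (h₀ v)))]
      congr 1
      rw [Fintype.card_subtype_compl]; simp
    rw [← h1, ← h2, ← Fintype.card_prod, ← Fintype.card_coe]
    refine Fintype.card_le_of_injective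
      (fun σ => ((σ.1.subtypeEquiv (Finset.mem_filter.1 σ.2).2,
        σ.1.subtypeEquiv (fun v => not_congr ((Finset.mem_filter.1 σ.2).2 v))) :
        ({x // x ∈ A} ≃ {y // y ∈ Y}) × ({x // ¬ x ∈ A} ≃ {y // ¬ y ∈ Y}))) ?_
    intro σ τ h
    apply Subtype.ext
    ext v : 1
    have ha := (Prod.mk.inj h).1
    have hb := (Prod.mk.inj h).2
    by_cases hv : v ∈ A
    · have := congrArg (fun f => (f ⟨v, hv⟩ : Fin n)) ha
      simpa using this
    · have := congrArg (fun f => (f ⟨v, hv⟩ : Fin n)) hb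
      simpa using this
  · have : (Finset.univ.filter fun σ : Equiv.Perm (Fin n) => ∀ v, v ∈ A ↔ σ v ∈ Y) = ∅ := by
      rw [Finset.filter_eq_empty_iff]
      intro σ _ h
      exact hne ⟨σ, h⟩
    rw [this]; simp

/-- Number of small sets. -/
lemma small_sets_le (n t : ℕ) (x : ℝ) (hx : 0 < x) (hx1 : x ≤ 1) :
    ((Finset.univ.filter fun Z : Finset (Fin n) => Z.card ≤ t).card : ℝ) * x ^ t
      ≤ (1 + x) ^ n := by
  have h := Fintype.sum_pow_mul_eq_add_pow (Fin n) x (1 : ℝ)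
  simp only [one_pow, mul_one, Fintype.card_fin] at h
  rw [add_comm 1 x, ← h, ← nsmul_eq_mul, ← Finset.sum_const]
  calc _ ≤ ∑ Z ∈ Finset.univ.filter (fun Z : Finset (Fin n) => Z.card ≤ t), x ^ Z.card := by
        apply Finset.sum_le_sum
        intro Z hZ
        exact pow_le_pow_of_le_one hx.le hx1 (Finset.mem_filter.1 hZ).2
    _ ≤ _ := Finset.sum_le_univ_sum_of_nonneg (fun Z => by positivity)

lemma pow_le_choose_real (s : ℕ) : ∀ n : ℕ, 1 ≤ s → s ≤ n →
    ((n : ℝ) / s) ^ s ≤ (n.choose s : ℝ) := by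
  induction s with
  | zero => intro n h; omega
  | succ s ih =>
    intro n _ hn
    obtain ⟨m, rfl⟩ : ∃ m, n = m + 1 := ⟨n - 1, by omega⟩
    rcases Nat.eq_zero_or_pos s with rfl | hs
    · simp
    · have h1 := ih m hs (by omega)
      have hsr : (0 : ℝ) < s := by exact_mod_cast hs
      have hsm : (s : ℝ) ≤ m := by exact_mod_cast (by omega : s ≤ m)
      have h2 : ((m + 1 : ℕ) : ℝ) / ((s + 1 : ℕ) : ℝ) ≤ (m : ℝ) / s := by
        rw [div_le_div_iff₀ (by positivity) hsr]
        push_cast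
        nlinarith
      have h3 : ((m + 1 : ℕ) : ℝ) * (m.choose s) = ((m + 1).choose (s + 1)) * ((s + 1 : ℕ) : ℝ) := by
        exact_mod_cast Nat.add_one_mul_choose_eq m s
      have h4 : (((m + 1).choose (s + 1) : ℕ) : ℝ)
          = ((m + 1 : ℕ) : ℝ) / ((s + 1 : ℕ) : ℝ) * (m.choose s) := by
        rw [div_mul_eq_mul_div, h3]
        field_simp
      rw [h4, pow_succ, mul_comm]
      apply mul_le_mul_of_nonneg_left _ (by positivity)
      exact (pow_le_pow_left₀ (by positivity) h2 s).trans h1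

lemma small_sets_pow (n s t : ℕ) (hs : 1 ≤ s) (hsn : 2 * s ≤ n) (ht : 32 * t ≤ s) :
    (Finset.univ.filter fun Z : Finset (Fin n) => Z.card ≤ t).card ^ 4 ≤ n.choose s := by
  set S := (Finset.univ.filter fun Z : Finset (Fin n) => Z.card ≤ t).card with hS
  have hs0 : (0 : ℝ) < s := by exact_mod_cast hs
  have hn0 : (0 : ℝ) < n := by exact_mod_cast (by omega : 0 < n)
  have hsn' : 2 * (s : ℝ) ≤ n := by exact_mod_cast hsn
  set r : ℝ := (n : ℝ) / s with hr
  have hr2 : 2 ≤ r := by rw [hr, le_div_iff₀ hs0]; exact hsn'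
  have hr0 : 0 < r := by linarith
  have hC : r ^ s ≤ (n.choose s : ℝ) := pow_le_choose_real s n hs (by omega)
  set x : ℝ := 1 / (32 * r) with hx
  have hx0 : 0 < x := by positivity
  have hx1 : x ≤ 1 := by
    rw [hx, div_le_one (by positivity)]; linarith
  have h1 := small_sets_le n t x hx0 hx1
  rw [← hS] at h1
  have h2 : (1 + x) ^ n ≤ Real.exp (n * x) := by
    rw [Real.exp_nat_mul]
    apply pow_le_pow_left₀ (by positivity)
    linarith [Real.add_one_le_exp x]
  have hnx : (n : ℝ) * x * 32 = s := by
    rw [hx, hr]; field_simp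
  have h3 : (S : ℝ) ≤ (32 * r) ^ t * Real.exp (n * x) := by
    have : (S : ℝ) = (32 * r) ^ t * (S * x ^ t) := by
      rw [hx, one_div, inv_pow]; field_simp
    rw [this]
    exact mul_le_mul_of_nonneg_left (h1.trans h2) (by positivity)
  have h32 : 32 * r ≤ r ^ 6 := by
    have : (2:ℝ) ^ 5 ≤ r ^ 5 := pow_le_pow_left₀ (by norm_num) hr2 5
    nlinarith
  have hexp : Real.exp (n * x) ^ 32 ≤ r ^ (2 * s) := by
    rw [← Real.exp_nat_mul]
    have : ((32 : ℕ) : ℝ) * (n * x) = s * 1 := by push_cast; linarith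
    rw [this, Real.exp_nat_mul, pow_mul]
    apply pow_le_pow_left₀ (Real.exp_pos _).le
    have := Real.exp_one_lt_d9
    nlinarith
  have h4 : (S : ℝ) ^ 32 ≤ (r ^ s) ^ 8 := by
    calc (S : ℝ) ^ 32 ≤ ((32 * r) ^ t * Real.exp (n * x)) ^ 32 :=
          pow_le_pow_left₀ (by positivity) h3 32
      _ = ((32 * r) ^ t) ^ 32 * Real.exp (n * x) ^ 32 := mul_pow _ _ _
      _ ≤ ((r ^ 6) ^ t) ^ 32 * r ^ (2 * s) := by gcongr
      _ = r ^ (6 * (32 * t) + 2 * s) := by ring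
      _ ≤ r ^ (6 * s + 2 * s) := pow_le_pow_right₀ (by linarith) (by omega)
      _ = (r ^ s) ^ 8 := by ring
  have h5 : (S : ℝ) ^ 4 ≤ r ^ s := by
    refine le_of_pow_le_pow_left₀ (n := 8) (by norm_num) (by positivity) ?_
    rw [← pow_mul]; exact h4
  exact_mod_cast h5.trans hC

lemma near_sets_card (n t : ℕ) (A : Finset (Fin n)) :
    (Finset.univ.filter fun Y : Finset (Fin n) => Y.card = A.card ∧ (A \ Y).card ≤ t).card
      ≤ (Finset.univ.filter fun Z : Finset (Fin n) => Z.card ≤ t).card ^ 2 := by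
  classical
  rw [sq, ← Finset.card_product]
  apply Finset.card_le_card_of_injOn (fun Y => (A \ Y, Y \ A))
  · intro Y hY
    simp only [Finset.coe_filter, Finset.mem_univ, true_and, Set.mem_ofPred_eq] at hY
    have := Finset.card_sdiff_add_card_inter A Y
    have h2 := Finset.card_sdiff_add_card_inter Y A
    rw [Finset.inter_comm] at h2
    simp only [Finset.coe_product, Set.mem_prod, Finset.coe_filter, Finset.mem_univ, true_and,
      Set.mem_ofPred_eq]
    omega
  · intro Y _ Z _ h
    have h1 := (Prod.mk.inj h).1
    have h2 := (Prod.mk.inj h).2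
    ext v
    have h1 := Finset.ext_iff.1 h1 v
    have h2 := Finset.ext_iff.1 h2 v
    simp only [Finset.mem_sdiff] at h1 h2
    tauto

/-- Permutations almost preserving `A`. -/
lemma near_perm_card (n : ℕ) (A : Finset (Fin n)) (h1 : 1 ≤ A.card) (h2 : 2 * A.card ≤ n) :
    (Finset.univ.filter fun σ : Equiv.Perm (Fin n) =>
        32 * (A.filter fun v => σ v ∉ A).card ≤ A.card).card ^ 2 * n.choose A.card
      ≤ n.factorial ^ 2 := by
  classical
  set s := A.card with hs
  set P := Finset.univ.filter fun σ : Equiv.Perm (Fin n) =>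
        32 * (A.filter fun v => σ v ∉ A).card ≤ s with hP
  set t := s / 32
  set K := Finset.univ.filter fun Y : Finset (Fin n) => Y.card = A.card ∧ (A \ Y).card ≤ t with hK
  have hKC : K.card ^ 2 ≤ n.choose s := by
    calc K.card ^ 2 ≤ (_ ^ 2) ^ 2 := Nat.pow_le_pow_left (near_sets_card n t A) 2
      _ = _ := by rw [← pow_mul]
      _ ≤ _ := small_sets_pow n s t h1 h2 (by omega)
  have hPK : P.card ≤ (s.factorial * (n - s).factorial) * K.card := by
    refine Finset.card_le_mul_card_image_of_maps_to
      (f := fun σ : Equiv.Perm (Fin n) => A.map σ.toEmbedding) ?_ _ ?_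
    · intro σ hσ
      rw [hP, Finset.mem_filter] at hσ
      rw [hK, Finset.mem_filter]
      refine ⟨Finset.mem_univ _, by simp, ?_⟩
      have e1 := Finset.card_sdiff_add_card_inter A (A.map σ.toEmbedding)
      have e2 := Finset.card_sdiff_add_card_inter (A.map σ.toEmbedding) A
      rw [Finset.inter_comm, Finset.card_map] at e2
      have e3 : (A.map σ.toEmbedding) \ A = (A.filter fun v => σ v ∉ A).map σ.toEmbedding := by
        ext y
        simp only [Finset.mem_sdiff, Finset.mem_map, Finset.mem_filter]
        constructor
        · rintro ⟨⟨a, ha, rfl⟩, h⟩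
          exact ⟨a, ⟨ha, h⟩, rfl⟩
        · rintro ⟨a, ⟨ha, h⟩, rfl⟩
          exact ⟨⟨a, ha, rfl⟩, h⟩
      have e4 := congrArg Finset.card e3
      rw [Finset.card_map] at e4
      omega
    · intro Y _
      refine le_trans (Finset.card_le_card ?_) (fiber_card_le n A Y)
      intro σ hσ
      simp only [Finset.mem_filter, Finset.mem_univ, true_and] at hσ ⊢
      intro v
      rw [← hσ.2]
      simp
  have hf := Nat.choose_mul_factorial_mul_factorial (show s ≤ n by omega)
  set Q := s.factorial * (n - s).factorial with hQ
  rw [mul_assoc] at hf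
  rw [← hf]
  calc P.card ^ 2 * n.choose s ≤ (Q * K.card) ^ 2 * n.choose s := by gcongr
    _ = Q ^ 2 * n.choose s * K.card ^ 2 := by ring
    _ ≤ Q ^ 2 * n.choose s * n.choose s := by gcongr
    _ = _ := by ring

lemma exists_perms (n : ℕ) (hn : 1 ≤ n) : ∃ σ : Fin 4 → Equiv.Perm (Fin n),
    ∀ A : Finset (Fin n), 2 * A.card ≤ n →
      A.card ≤ 32 * ∑ i, (A.filter fun v => σ i v ∉ A).card := by
  classical
  by_contra hcon
  push Not at hcon
  let I := Finset.univ.filter fun A : Finset (Fin n) => 1 ≤ A.card ∧ 2 * A.card ≤ n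
  let P : Finset (Fin n) → Finset (Equiv.Perm (Fin n)) := fun A =>
    Finset.univ.filter fun σ : Equiv.Perm (Fin n) =>
        32 * (A.filter fun v => σ v ∉ A).card ≤ A.card
  have hcover : (Finset.univ : Finset (Fin 4 → Equiv.Perm (Fin n))) ⊆
      I.biUnion fun A => Fintype.piFinset fun _ : Fin 4 => P A := by
    intro σ _
    obtain ⟨A, hA, hlt⟩ := hcon σ
    rw [Finset.mem_biUnion]
    refine ⟨A, ?_, ?_⟩
    · simp only [I, Finset.mem_filter, Finset.mem_univ, true_and]; omega
    · rw [Fintype.mem_piFinset]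
      intro i
      simp only [P, Finset.mem_filter, Finset.mem_univ, true_and]
      have := Finset.single_le_sum (f := fun i => (A.filter fun v => σ i v ∉ A).card)
        (fun _ _ => Nat.zero_le _) (Finset.mem_univ i)
      omega
  have hcard := (Finset.card_le_card hcover).trans Finset.card_biUnion_le
  simp only [Finset.card_univ, Fintype.card_fun, Fintype.card_fin, Fintype.card_perm,
    Fintype.card_piFinset, Finset.prod_const] at hcard
  have hbound : ∀ A ∈ I, ((P A).card : ℝ) ^ 4 ≤ (n.factorial : ℝ) ^ 4 / (n.choose A.card : ℝ) ^ 2 := by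
    intro A hA
    simp only [I, Finset.mem_filter, Finset.mem_univ, true_and] at hA
    have h := near_perm_card n A hA.1 hA.2
    have hc : 0 < n.choose A.card := Nat.choose_pos (by omega)
    have hc' : (0 : ℝ) < n.choose A.card := by exact_mod_cast hc
    rw [le_div_iff₀ (by positivity)]
    have h' : ((P A).card : ℝ) ^ 2 * n.choose A.card ≤ (n.factorial : ℝ) ^ 2 := by
      exact_mod_cast h
    have := pow_le_pow_left₀ (by positivity) h' 2
    calc _ = (((P A).card : ℝ) ^ 2 * n.choose A.card) ^ 2 := by ring
      _ ≤ _ := this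
      _ = _ := by ring
  have hsum : ∑ A ∈ I, ((n.factorial : ℝ) ^ 4 / (n.choose A.card : ℝ) ^ 2)
      ≤ ∑ s ∈ Finset.Icc 1 (n / 2), (n.factorial : ℝ) ^ 4 / n := by
    rw [← Finset.sum_fiberwise_of_maps_to (s := I) (t := Finset.Icc 1 (n / 2))
      (g := fun A => A.card)]
    · apply Finset.sum_le_sum
      intro s hs
      rw [Finset.mem_Icc] at hs
      have hcn : n ≤ n.choose s := by
        obtain ⟨h1, h2⟩ := hs
        clear hcard hbound hcover
        induction s, h1 using Nat.le_induction with
        | base => simp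
        | succ m hm ih =>
          exact (ih (by omega)).trans (Nat.choose_le_succ_of_lt_half_left (by omega))
      have hc0 : (0 : ℝ) < n.choose s := by exact_mod_cast (by omega : 0 < n.choose s)
      have hn0 : (0 : ℝ) < n := by exact_mod_cast hn
      calc _ ≤ ∑ A ∈ Finset.powersetCard s (Finset.univ : Finset (Fin n)),
            ((n.factorial : ℝ) ^ 4 / (n.choose s : ℝ) ^ 2) := by
            rw [Finset.sum_congr rfl (g := fun _ => (n.factorial : ℝ) ^ 4 / (n.choose s : ℝ) ^ 2)
              (fun A hA => by rw [(Finset.mem_filter.1 hA).2])]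
            apply Finset.sum_le_sum_of_subset_of_nonneg
            · intro A hA
              rw [Finset.mem_powersetCard_univ]
              exact (Finset.mem_filter.1 hA).2
            · intros; positivity
        _ = (n.factorial : ℝ) ^ 4 / n.choose s := by
            rw [Finset.sum_const, Finset.card_powersetCard, Finset.card_univ, Fintype.card_fin,
              nsmul_eq_mul]
            field_simp
        _ ≤ _ := by
            apply div_le_div_of_nonneg_left (by positivity) hn0
            exact_mod_cast hcn
    · intro A hA
      simp only [I, Finset.mem_filter, Finset.mem_univ, true_and] at hA
      rw [Finset.mem_Icc]; omega
  have hn0 : (0 : ℝ) < n := by exact_mod_cast hn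
  have hN : (0 : ℝ) < (n.factorial : ℝ) ^ 4 := by positivity
  have hhalf : ((n / 2 : ℕ) : ℝ) ≤ n / 2 := Nat.cast_div_le
  have hfin : (n.factorial : ℝ) ^ 4 ≤ ∑ A ∈ I, ((P A).card : ℝ) ^ 4 := by exact_mod_cast hcard
  have := hfin.trans ((Finset.sum_le_sum hbound).trans hsum)
  rw [Finset.sum_const, Nat.card_Icc, nsmul_eq_mul, Nat.add_sub_cancel] at this
  rw [mul_div_assoc', le_div_iff₀ hn0] at this
  nlinarith

/-- Vertex set of the subdivided graph: base vertices, and `l` inner vertices per edge. -/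
abbrev SubV (n l : ℕ) := Fin n ⊕ (Fin n × Fin 4) × Fin l

/-- The `j`-th vertex on the subdivided edge `g`, for `0 ≤ j ≤ l + 1`. -/
def subPos {n : ℕ} (l : ℕ) (σ : Fin 4 → Equiv.Perm (Fin n)) (g : Fin n × Fin 4) (j : ℕ) :
    SubV n l :=
  if j = 0 then Sum.inl g.1
  else if h : j - 1 < l then Sum.inr (g, ⟨j - 1, h⟩) else Sum.inl (σ g.2 g.1)

/-- The subdivided graph. -/
def subGraph {n : ℕ} (l : ℕ) (σ : Fin 4 → Equiv.Perm (Fin n)) : SimpleGraph (SubV n l) :=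
  SimpleGraph.fromRel fun a b => ∃ g, ∃ j, j ≤ l ∧ a = subPos l σ g j ∧ b = subPos l σ g (j + 1)

section
variable {n l : ℕ} {σ : Fin 4 → Equiv.Perm (Fin n)}

lemma subPos_zero (g : Fin n × Fin 4) : subPos l σ g 0 = Sum.inl g.1 := by simp [subPos]

lemma subPos_inner (g : Fin n × Fin 4) (j : ℕ) (h : j < l) :
    subPos l σ g (j + 1) = Sum.inr (g, ⟨j, h⟩) := by simp [subPos, h]

lemma subPos_last (g : Fin n × Fin 4) : subPos l σ g (l + 1) = Sum.inl (σ g.2 g.1) := by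
  simp [subPos]

lemma subPos_inj {g g' : Fin n × Fin 4} {j j' : ℕ} (h1 : 1 ≤ j) (h2 : j ≤ l)
    (h : subPos l σ g j = subPos l σ g' j') : g = g' ∧ j = j' := by
  obtain ⟨i, rfl⟩ : ∃ i, j = i + 1 := ⟨j - 1, by omega⟩
  rw [subPos_inner g i (by omega)] at h
  unfold subPos at h
  split_ifs at h with h3 h4
  have h5 := Sum.inr.inj h
  have h6 := (Prod.mk.inj h5).1
  have h7 := Fin.mk.inj (Prod.mk.inj h5).2
  exact ⟨h6, by omega⟩

lemma subPos_ne (hl : 1 ≤ l) (g : Fin n × Fin 4) (j : ℕ) (hj : j ≤ l) :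
    subPos l σ g j ≠ subPos l σ g (j + 1) := by
  intro h
  by_cases h0 : 1 ≤ j
  · have := (subPos_inj h0 hj h).2; omega
  · have := (subPos_inj (by omega) (by omega) h.symm).2; omega

lemma subGraph_adj (hl : 1 ≤ l) (g : Fin n × Fin 4) (j : ℕ) (hj : j ≤ l) :
    (subGraph l σ).Adj (subPos l σ g j) (subPos l σ g (j + 1)) := by
  rw [subGraph, SimpleGraph.fromRel_adj]
  exact ⟨subPos_ne hl g j hj, Or.inl ⟨g, j, hj, rfl, rfl⟩⟩

lemma subGraph_nbr {g : Fin n × Fin 4} {j : ℕ} (hj : j < l) {b : SubV n l}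
    (h : (subGraph l σ).Adj (subPos l σ g (j + 1)) b) :
    b = subPos l σ g j ∨ b = subPos l σ g (j + 2) := by
  rw [subGraph, SimpleGraph.fromRel_adj] at h
  obtain ⟨_, ⟨g', j', _, h1, h2⟩ | ⟨g', j', _, h1, h2⟩⟩ := h
  · obtain ⟨rfl, rfl⟩ := subPos_inj (by omega) (by omega) h1
    exact Or.inr h2
  · obtain ⟨rfl, h3⟩ := subPos_inj (by omega) (by omega) h2
    obtain rfl : j = j' := by omega
    exact Or.inl h1

lemma cycle_step {x : SubV n l} (w : (subGraph l σ).Walk x x) (hw : w.IsCycle)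
    (g : Fin n × Fin 4) (j : ℕ) (hj : j < l)
    (h : s(subPos l σ g j, subPos l σ g (j + 1)) ∈ w.edges ∨
      s(subPos l σ g (j + 1), subPos l σ g (j + 2)) ∈ w.edges) :
    s(subPos l σ g j, subPos l σ g (j + 1)) ∈ w.edges ∧
      s(subPos l σ g (j + 1), subPos l σ g (j + 2)) ∈ w.edges ∧
      subPos l σ g j ≠ subPos l σ g (j + 2) := by
  have hsup : subPos l σ g (j + 1) ∈ w.support := by
    rcases h with h | h
    · exact w.snd_mem_support_of_mem_edges h
    · exact w.fst_mem_support_of_mem_edges h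
  have h2 := hw.ncard_neighborSet_toSubgraph_eq_two hsup
  obtain ⟨a, b, hab, hset⟩ := Set.ncard_eq_two.1 h2
  have ha : a ∈ w.toSubgraph.neighborSet (subPos l σ g (j + 1)) := by rw [hset]; simp
  have hb : b ∈ w.toSubgraph.neighborSet (subPos l σ g (j + 1)) := by rw [hset]; simp
  rw [SimpleGraph.Subgraph.mem_neighborSet] at ha hb
  have ha' := subGraph_nbr hj ha.adj_sub
  have hb' := subGraph_nbr hj hb.adj_sub
  rw [← SimpleGraph.Subgraph.mem_edgeSet, SimpleGraph.Walk.mem_edges_toSubgraph] at ha hb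
  rcases ha' with rfl | rfl <;> rcases hb' with rfl | rfl
  · exact absurd rfl hab
  · exact ⟨by rw [Sym2.eq_swap]; exact ha, hb, hab⟩
  · exact ⟨by rw [Sym2.eq_swap]; exact hb, ha, hab.symm⟩
  · exact absurd rfl hab

lemma cycle_all {x : SubV n l} (w : (subGraph l σ).Walk x x) (hw : w.IsCycle)
    (g : Fin n × Fin 4) (j : ℕ) (hj : j ≤ l) :
    s(subPos l σ g j, subPos l σ g (j + 1)) ∈ w.edges ↔
      s(subPos l σ g 0, subPos l σ g 1) ∈ w.edges := by
  induction j with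
  | zero => rfl
  | succ j ih =>
    rw [← ih (by omega)]
    constructor
    · intro h
      exact (cycle_step w hw g j (by omega) (Or.inr h)).1
    · intro h
      exact (cycle_step w hw g j (by omega) (Or.inl h)).2.1

lemma cycle_dvd (hl : 1 ≤ l) {x : SubV n l} (w : (subGraph l σ).Walk x x) (hw : w.IsCycle) :
    l + 1 ∣ w.length := by
  classical
  let e : (Fin n × Fin 4) × ℕ → Sym2 (SubV n l) :=
    fun q => s(subPos l σ q.1 q.2, subPos l σ q.1 (q.2 + 1))
  let T : Finset (Fin n × Fin 4) := Finset.univ.filter fun g => e (g, 0) ∈ w.edges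
  have hmem : ∀ q ∈ T ×ˢ Finset.range (l + 1), e q ∈ w.edges := by
    rintro ⟨g, j⟩ hq
    simp only [T, Finset.mem_product, Finset.mem_filter, Finset.mem_univ, true_and,
      Finset.mem_range] at hq
    exact (cycle_all w hw g j (by omega)).2 hq.1
  have himg : (T ×ˢ Finset.range (l + 1)).image e = w.edges.toFinset := by
    ext y
    rw [Finset.mem_image, List.mem_toFinset]
    constructor
    · rintro ⟨q, hq, rfl⟩
      exact hmem q hq
    · intro hy
      have key : ∃ g, ∃ j, j ≤ l ∧ y = e (g, j) := by
        have hG := w.edges_subset_edgeSet hy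
        induction y using Sym2.ind with
        | _ a b =>
          rw [SimpleGraph.mem_edgeSet, subGraph, SimpleGraph.fromRel_adj] at hG
          obtain ⟨_, ⟨g', j', h0, h1, h2⟩ | ⟨g', j', h0, h1, h2⟩⟩ := hG
          · exact ⟨g', j', h0, by rw [h1, h2]⟩
          · exact ⟨g', j', h0, by rw [h1, h2, Sym2.eq_swap]⟩
      obtain ⟨g, j, hj, rfl⟩ := key
      refine ⟨(g, j), ?_, rfl⟩
      simp only [T, Finset.mem_product, Finset.mem_filter, Finset.mem_univ, true_and,
        Finset.mem_range]
      exact ⟨(cycle_all w hw g j hj).1 hy, by omega⟩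
  have hinj : Set.InjOn e (T ×ˢ Finset.range (l + 1) : Finset _) := by
    rintro ⟨g, j⟩ hq ⟨g', j'⟩ hq' h
    have m1 := hmem _ hq
    have m2 := hmem _ hq'
    have hj : j ≤ l := by
      have := (Finset.mem_product.1 hq).2
      simp only [Finset.mem_range] at this; omega
    have hj' : j' ≤ l := by
      have := (Finset.mem_product.1 hq').2
      simp only [Finset.mem_range] at this; omega
    simp only [e] at h m1 m2
    rw [Sym2.eq_iff] at h
    rcases h with ⟨h1, h2⟩ | ⟨h1, h2⟩
    · by_cases h0 : 1 ≤ j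
      · obtain ⟨rfl, rfl⟩ := subPos_inj h0 hj h1
        rfl
      · obtain ⟨rfl, h3⟩ := subPos_inj (by omega) (by omega) h2
        obtain rfl : j = j' := by omega
        rfl
    · exfalso
      by_cases h0 : 1 ≤ j
      · obtain ⟨rfl, rfl⟩ := subPos_inj h0 hj h1
        exact (cycle_step w hw g j' (by omega) (Or.inl m2)).2.2 h2.symm
      · obtain ⟨rfl, rfl⟩ := subPos_inj (by omega) (by omega) h2
        exact (cycle_step w hw g j (by omega) (Or.inl m1)).2.2 h1
  have hlen : w.length = T.card * (l + 1) := by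
    rw [← w.length_edges, ← List.toFinset_card_of_nodup hw.edges_nodup, ← himg,
      Finset.card_image_of_injOn hinj, Finset.card_product, Finset.card_range]
  rw [hlen]
  exact Dvd.intro_left _ rfl

end

lemma card_fst {n : ℕ} (S : Finset (Fin n)) :
    (Finset.univ.filter fun g : Fin n × Fin 4 => g.1 ∈ S).card = 4 * S.card := by
  have : (Finset.univ.filter fun g : Fin n × Fin 4 => g.1 ∈ S) = S ×ˢ Finset.univ := by
    ext g; simp
  rw [this, Finset.card_product]; simp [mul_comm]

lemma card_snd {n : ℕ} (σ : Fin 4 → Equiv.Perm (Fin n)) (S : Finset (Fin n)) :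
    (Finset.univ.filter fun g : Fin n × Fin 4 => σ g.2 g.1 ∈ S).card ≤ 4 * S.card := by
  rw [← card_fst]
  apply Finset.card_le_card_of_injOn (fun g => (σ g.2 g.1, g.2))
  · intro g hg
    simpa using hg
  · rintro ⟨a, i⟩ _ ⟨b, j⟩ _ h
    simp only [Prod.mk.injEq] at h
    obtain ⟨h1, rfl⟩ := h
    simpa using h1

lemma card_cross {n : ℕ} (σ : Fin 4 → Equiv.Perm (Fin n)) (A : Finset (Fin n)) :
    ∑ i, (A.filter fun v => σ i v ∉ A).card =
      (Finset.univ.filter fun g : Fin n × Fin 4 => g.1 ∈ A ∧ σ g.2 g.1 ∉ A).card := by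
  classical
  simp only [Finset.card_filter]
  rw [Fintype.sum_prod_type_right]
  apply Finset.sum_congr rfl
  intro i _
  rw [← Finset.sum_filter_add_sum_filter_not Finset.univ (fun v => v ∈ A)]
  rw [Finset.sum_eq_zero (s := Finset.univ.filter fun v => ¬ v ∈ A), add_zero]
  · rw [Finset.filter_univ_mem]
    apply Finset.sum_congr rfl
    intro v hv
    simp [hv]
  · intro v hv
    simp [(Finset.mem_filter.1 hv).2]

/-- The number of edges leaving `A` equals that leaving the complement. -/
lemma cross_compl {n : ℕ} (σ : Equiv.Perm (Fin n)) (A : Finset (Fin n)) :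
    (Aᶜ.filter fun v => σ v ∉ Aᶜ).card = (A.filter fun v => σ v ∉ A).card := by
  classical
  have h1 : (A.filter fun v => σ v ∈ A).card + (A.filter fun v => σ v ∉ A).card = A.card :=
    Finset.card_filter_add_card_filter_not _
  have h2 : (A.filter fun v => σ v ∈ A).card + (Aᶜ.filter fun v => σ v ∉ Aᶜ).card = A.card := by
    have h3 : (Finset.univ.filter fun v => σ v ∈ A).card = A.card := by
      rw [← Finset.card_map σ.toEmbedding]
      congr 1
      ext v
      simp only [Finset.mem_map, Finset.mem_filter, Finset.mem_univ, true_and]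
      constructor
      · rintro ⟨a, ha, rfl⟩; exact ha
      · intro hv; exact ⟨σ.symm v, by simpa using hv, by simp⟩
    rw [← h3, ← Finset.card_union_of_disjoint]
    · congr 1
      ext v
      simp only [Finset.mem_union, Finset.mem_filter, Finset.mem_compl, Finset.mem_univ, true_and,
        not_not]
      tauto
    · rw [Finset.disjoint_left]
      intro v hv hv'
      simp only [Finset.mem_filter, Finset.mem_compl] at hv hv'
      exact hv'.1 hv.1
  omega

lemma sub_expand {n l : ℕ} (hl : 1 ≤ l) (σ : Fin 4 → Equiv.Perm (Fin n))
    (hσ : ∀ A : Finset (Fin n), 2 * A.card ≤ n →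
      A.card ≤ 32 * ∑ i, (A.filter fun v => σ i v ∉ A).card)
    (X : Finset (SubV n l)) (hX : 2 * X.card ≤ n + 4 * n * l) :
    X.card ≤ 5000 * l * (extNbhd (subGraph l σ) X).card := by
  classical
  set D := extNbhd (subGraph l σ) X with hD
  have hDmem : ∀ a b, a ∈ X → (subGraph l σ).Adj a b → b ∉ D → b ∈ X := by
    intro a b ha hab hb
    by_contra hbX
    apply hb
    rw [hD, extNbhd]
    simp only [Finset.mem_filter, Finset.mem_univ, true_and]
    exact ⟨hbX, a, ha, hab⟩
  let A : Finset (Fin n) := Finset.univ.filter fun v => Sum.inl v ∈ X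
  let U : Finset (Fin n) := Finset.univ.filter fun v => Sum.inl v ∈ D
  let P : Finset (Fin n × Fin 4) := Finset.univ.filter fun g => ∃ j, Sum.inr (g, j) ∈ D
  let F : Finset (Fin n × Fin 4) := Finset.univ.filter fun g => ∀ j, Sum.inr (g, j) ∈ X
  have hU : U.card ≤ D.card := by
    apply Finset.card_le_card_of_injOn (fun v => Sum.inl v)
    · intro v hv
      simpa [U] using hv
    · intro a _ b _ h
      exact Sum.inl.inj h
  have hP : P.card ≤ D.card := by
    have : P ⊆ D.biUnion fun x => Sum.elim (fun _ => ∅) (fun q => {q.1}) x := by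
      intro g hg
      obtain ⟨j, hj⟩ := (Finset.mem_filter.1 hg).2
      rw [Finset.mem_biUnion]
      exact ⟨_, hj, by simp⟩
    refine (Finset.card_le_card this).trans ?_
    refine (Finset.card_biUnion_le_card_mul _ _ 1 ?_).trans (by simp)
    rintro (x | x) _ <;> simp
  -- propagation along a path without boundary
  have hprop : ∀ g ∉ P, ∀ j, j ≤ l + 1 → subPos l σ g j ∈ X → g ∈ F := by
    intro g hg j hj hjX
    have hnot : ∀ i (hi : i < l), subPos l σ g (i + 1) ∉ D := by
      intro i hi hmem
      rw [subPos_inner g i hi] at hmem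
      exact hg (Finset.mem_filter.2 ⟨Finset.mem_univ _, ⟨i, hi⟩, hmem⟩)
    have hup : ∀ k, j + k ≤ l → subPos l σ g (j + k) ∈ X := by
      intro k
      induction k with
      | zero => intro _; exact hjX
      | succ k ih =>
        intro hk
        exact hDmem _ _ (ih (by omega)) (subGraph_adj hl g (j + k) (by omega))
          (hnot (j + k) (by omega))
    have hdown : ∀ k, k < j → subPos l σ g (j - k) ∈ X := by
      intro k
      induction k with
      | zero => intro _; exact hjX
      | succ k ih =>
        intro hk
        have h1 := ih (by omega)
        have h2 := (subGraph_adj (σ := σ) hl g (j - (k + 1)) (by omega)).symm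
        rw [show j - (k + 1) + 1 = j - k by omega] at h2
        refine hDmem _ _ h1 h2 ?_
        have h3 := hnot (j - (k + 1) - 1) (by omega)
        rwa [show j - (k + 1) - 1 + 1 = j - (k + 1) by omega] at h3
    refine Finset.mem_filter.2 ⟨Finset.mem_univ _, ?_⟩
    rintro ⟨i, hi⟩
    rw [← subPos_inner (σ := σ) g i hi]
    by_cases hij : j ≤ i + 1
    · have := hup (i + 1 - j) (by omega)
      rwa [show j + (i + 1 - j) = i + 1 by omega] at this
    · have := hdown (j - (i + 1)) (by omega)
      rwa [show j - (j - (i + 1)) = i + 1 by omega] at this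
  have hmemA : ∀ v, v ∈ A ↔ Sum.inl v ∈ X := by intro v; simp [A]
  have hmemU : ∀ v, v ∈ U ↔ Sum.inl v ∈ D := by intro v; simp [U]
  have hF0 : ∀ g ∉ P, g.1 ∈ A → g ∈ F := by
    intro g hg hv
    apply hprop g hg 0 (by omega)
    rw [subPos_zero]; exact (hmemA _).1 hv
  have hFX : ∀ g ∈ F, ∀ i, i < l → subPos l σ g (i + 1) ∈ X := by
    intro g hg i hi
    rw [subPos_inner g i hi]
    exact (Finset.mem_filter.1 hg).2 _
  have hFfst : ∀ g ∈ F, g.1 ∈ A ∨ g.1 ∈ U := by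
    intro g hg
    by_contra hcon
    rw [not_or, hmemA, hmemU] at hcon
    apply hcon.1
    rw [← subPos_zero (l := l) (σ := σ)] at hcon ⊢
    exact hDmem _ _ (hFX g hg 0 (by omega)) (subGraph_adj hl g 0 (by omega)).symm hcon.2
  have hFsnd : ∀ g ∈ F, σ g.2 g.1 ∈ A ∨ σ g.2 g.1 ∈ U := by
    intro g hg
    by_contra hcon
    rw [not_or, hmemA, hmemU] at hcon
    apply hcon.1
    rw [← subPos_last (l := l) (σ := σ)] at hcon ⊢
    have h1 := hFX g hg (l - 1) (by omega)
    rw [show l - 1 + 1 = l by omega] at h1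
    exact hDmem _ _ h1 (subGraph_adj hl g l le_rfl) hcon.2
  -- counting
  have hcross : ∑ i, (A.filter fun v => σ i v ∉ A).card ≤ P.card + 4 * U.card := by
    rw [card_cross]
    refine le_trans ?_ (Nat.add_le_add_left (card_snd σ U) _)
    refine le_trans (Finset.card_le_card ?_) (Finset.card_union_le _ _)
    intro g hg
    simp only [Finset.mem_filter, Finset.mem_univ, true_and] at hg
    rw [Finset.mem_union]
    by_cases hgP : g ∈ P
    · exact Or.inl hgP
    · right
      rw [Finset.mem_filter]
      exact ⟨Finset.mem_univ _, (hFsnd g (hF0 g hgP hg.1)).resolve_left hg.2⟩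
  have hFcard : F.card ≤ 4 * A.card + 4 * U.card := by
    rw [← card_fst, ← card_fst]
    refine le_trans (Finset.card_le_card ?_) (Finset.card_union_le _ _)
    intro g hg
    simpa using hFfst g hg
  have hFc : 4 * n ≤ F.card + P.card + 4 * Aᶜ.card := by
    have : (Finset.univ : Finset (Fin n × Fin 4)).card = 4 * n := by simp [mul_comm]
    rw [← this, ← card_fst]
    refine le_trans (Finset.card_le_card ?_) ((Finset.card_union_le (F ∪ P) _).trans
      (Nat.add_le_add_right (Finset.card_union_le _ _) _))
    intro g _
    simp only [Finset.mem_union, Finset.mem_filter, Finset.mem_univ, true_and, Finset.mem_compl]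
    have := hF0 g
    tauto
  have hXcard : X.card = A.card +
      ∑ g : Fin n × Fin 4, (Finset.univ.filter fun j : Fin l => Sum.inr (g, j) ∈ X).card := by
    have : X.card = ∑ x : SubV n l, if x ∈ X then 1 else 0 := by
      rw [← Finset.card_filter, Finset.filter_univ_mem]
    rw [this, Fintype.sum_sum_type, Fintype.sum_prod_type]
    simp only [A, Finset.card_filter]
  have hXle : X.card ≤ A.card + l * (F.card + P.card) := by
    rw [hXcard]
    apply Nat.add_le_add_left
    calc _ ≤ ∑ g : Fin n × Fin 4, if g ∈ F ∪ P then l else 0 := by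
          apply Finset.sum_le_sum
          intro g _
          split_ifs with h
          · exact (Finset.card_le_univ _).trans (by simp)
          · rw [Finset.mem_union, not_or] at h
            rw [Nat.le_zero, Finset.card_eq_zero, Finset.filter_eq_empty_iff]
            intro j _ hj
            apply h.1
            apply hprop g h.2 (j + 1) (by omega)
            rw [subPos_inner g j j.2]
            exact hj
      _ = (F ∪ P).card * l := by
          rw [← Finset.sum_filter, Finset.filter_univ_mem, Finset.sum_const, smul_eq_mul]
      _ ≤ _ := by
          rw [mul_comm]
          exact Nat.mul_le_mul_left _ (Finset.card_union_le _ _)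
  have hXge : A.card + l * F.card ≤ X.card := by
    rw [hXcard]
    apply Nat.add_le_add_left
    calc l * F.card = ∑ g : Fin n × Fin 4, if g ∈ F then l else 0 := by
          rw [← Finset.sum_filter, Finset.filter_univ_mem, Finset.sum_const, smul_eq_mul, mul_comm]
      _ ≤ _ := by
          apply Finset.sum_le_sum
          intro g _
          split_ifs with h
          · rw [Finset.filter_true_of_mem (fun j _ => (Finset.mem_filter.1 h).2 j)]
            simp
          · exact Nat.zero_le _
  have hAc : A.card + Aᶜ.card = n := by
    rw [Finset.card_add_card_compl]; simp
  have hA : A.card ≤ 500 * D.card := by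
    by_cases hhalf : 2 * A.card ≤ n
    · have := hσ A hhalf
      omega
    · have h1 := hσ Aᶜ (by omega)
      simp only [cross_compl] at h1
      have h2 : F.card ≤ 2 * n := by
        by_contra hcon
        have : l * (2 * n + 1) ≤ l * F.card := Nat.mul_le_mul_left _ (by omega)
        nlinarith
      omega
  have h3 : F.card + P.card ≤ 2005 * D.card := by omega
  calc X.card ≤ A.card + l * (F.card + P.card) := hXle
    _ ≤ l * (500 * D.card) + l * (2005 * D.card) := by
        apply Nat.add_le_add (hA.trans (Nat.le_mul_of_pos_left _ hl)) (Nat.mul_le_mul_left _ h3)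
    _ ≤ 5000 * l * D.card := by nlinarith [Nat.zero_le (l * D.card)]

lemma extNbhd_map {V W : Type*} [Fintype V] [Fintype W] (G : SimpleGraph V) (H : SimpleGraph W)
    (f : G ≃g H) (X : Finset V) :
    (extNbhd H (X.map f.toEquiv.toEmbedding)) = (extNbhd G X).map f.toEquiv.toEmbedding := by
  ext w
  obtain ⟨v, rfl⟩ := f.surjective w
  have hm : ∀ (Y : Finset V) (u : V), f u ∈ Y.map f.toEquiv.toEmbedding ↔ u ∈ Y := by
    intro Y u
    exact Finset.mem_map' f.toEquiv.toEmbedding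
  rw [hm]
  simp only [extNbhd, Finset.mem_filter, Finset.mem_univ, true_and, hm]
  apply and_congr_right
  intro _
  constructor
  · rintro ⟨u, hu, h⟩
    obtain ⟨u, rfl⟩ := f.surjective u
    exact ⟨u, (hm _ _).1 hu, f.map_adj_iff.1 h⟩
  · rintro ⟨u, hu, h⟩
    exact ⟨f u, (hm _ _).2 hu, f.map_adj_iff.2 h⟩

/-- There is an absolute constant c > 0 such that for every k > 1 with smallest prime
divisor p and every 0 < α < c/(p-1), there exist arbitrarily large α-expanding graphs in
which every cycle has length divisible by p; in particular with no cycle of length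
congruent to 1 modulo k. -/
theorem stmt17 :
    ∃ c : ℝ, 0 < c ∧ ∀ k : ℕ, 1 < k → ∀ α : ℝ, 0 < α →
      α < c / ((k.minFac : ℝ) - 1) → ∀ n₀ : ℕ,
      ∃ n : ℕ, ∃ G : SimpleGraph (Fin n), n₀ ≤ n ∧ IsExpander G α ∧
        (∀ v : Fin n, ∀ w : G.Walk v v, w.IsCycle → k.minFac ∣ w.length) ∧
        (∀ v : Fin n, ∀ w : G.Walk v v, w.IsCycle → ((w.length : ZMod k) ≠ 1)) := by
  
  refine ⟨1 / 5000, by norm_num, ?_⟩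
  intro k hk α hα hαc n₀
  have hp : k.minFac.Prime := Nat.minFac_prime (by omega)
  obtain ⟨l, hl⟩ : ∃ l, k.minFac = l + 1 := ⟨k.minFac - 1, by have := hp.two_le; omega⟩
  have hl1 : 1 ≤ l := by have := hp.two_le; omega
  obtain ⟨n, hn⟩ : ∃ n, n = n₀ + 1 := ⟨_, rfl⟩
  obtain ⟨σ, hσ⟩ := exists_perms n (by omega)
  have hcardV : Fintype.card (SubV n l) = n + 4 * n * l := by
    simp only [SubV, Fintype.card_sum, Fintype.card_prod, Fintype.card_fin]; ring
  let e : SubV n l ≃ Fin (Fintype.card (SubV n l)) := Fintype.equivFin _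
  let H : SimpleGraph (Fin (Fintype.card (SubV n l))) := (subGraph l σ).map e.toEmbedding
  let f : subGraph l σ ≃g H := SimpleGraph.Iso.map e (subGraph l σ)
  have hdvd : ∀ v, ∀ w : H.Walk v v, w.IsCycle → k.minFac ∣ w.length := by
    intro v w hw
    rw [hl]
    have h1 := hw.map (f := f.symm.toHom) f.symm.injective
    have h2 := cycle_dvd hl1 _ h1
    rwa [SimpleGraph.Walk.length_map] at h2
  refine ⟨_, H, ?_, ?_, hdvd, ?_⟩
  · rw [hcardV, hn]
    exact le_trans (by omega) (Nat.le_add_right _ _)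
  · intro Y hY
    obtain ⟨X, rfl⟩ : ∃ X : Finset (SubV n l), Y = X.map f.toEquiv.toEmbedding := by
      refine ⟨Y.map f.symm.toEquiv.toEmbedding, ?_⟩
      ext y
      simp only [Finset.mem_map, Equiv.coe_toEmbedding, exists_exists_and_eq_and]
      constructor
      · intro hy; exact ⟨y, hy, f.apply_symm_apply y⟩
      · rintro ⟨a, ha, h⟩
        have : a = y := (f.apply_symm_apply a).symm.trans h
        exact this ▸ ha
    rw [extNbhd_map, Finset.card_map, Finset.card_map]
    rw [Finset.card_map, Fintype.card_fin, hcardV, le_div_iff₀ (by norm_num)] at hY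
    have hY' : 2 * X.card ≤ n + 4 * n * l := by
      rw [mul_comm]; exact_mod_cast hY
    have h := sub_expand hl1 σ hσ X hY'
    have h' : (X.card : ℝ) ≤ 5000 * l * ((extNbhd (subGraph l σ) X).card : ℝ) := by
      exact_mod_cast h
    have hl0 : (0 : ℝ) < l := by exact_mod_cast hl1
    rw [hl] at hαc
    push_cast at hαc
    rw [add_sub_cancel_right, lt_div_iff₀ hl0] at hαc
    set d : ℝ := ((extNbhd (subGraph l σ) X).card : ℝ) with hd
    have hd0 : 0 ≤ d := Nat.cast_nonneg _
    calc α * X.card ≤ α * (5000 * l * d) := mul_le_mul_of_nonneg_left h' hα.le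
      _ = 5000 * (α * l) * d := by ring
      _ ≤ 1 * d := mul_le_mul_of_nonneg_right (by linarith) hd0
      _ = d := one_mul d
  · intro v w hw h1
    have hd := hdvd v w hw
    have hmod : w.length ≡ 1 [MOD k] := by
      rw [← ZMod.natCast_eq_natCast_iff]; simpa using h1
    have h2 := hmod.of_dvd (Nat.minFac_dvd k)
    have h3 := (Nat.modEq_zero_iff_dvd.2 hd).symm.trans h2
    have h4 : k.minFac ∣ 1 := Nat.modEq_zero_iff_dvd.1 h3.symm
    exact hp.one_lt.ne' (Nat.dvd_one.1 h4)
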